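/- arXiv:2303.00514 — 3 statements merged into one kernel-verified Lean document; each statement's English description precedes it below -/
import Mathlib

section
/- Let T : X → X be a continuous map on a compact metric space (X,d), let α ∈ (0,1], and let O be a periodic orbit of T; write μ_O := (1/card O) Σ_{x∈O} δ_x. Let λ_α ∈ (0, diam_d(X)) be any number such that for all i ∈ {0, 1, …, card O − 1} and all x,y ∈ X with d(x,y) < λ_α one has d(T^i(x), T^i(y)) < 2^{−1/α} · min{d(w,z) : w,z ∈ O, w ≠ z} (the minimum over the empty set being +∞). Then for every β ∈ [α,1], every ν ∈ M(X,T), and every φ ∈ Lip(X,d^β), one has ∫φ dν − ∫φ dμ_O ≤ (diam_d(X)/λ_α)^β · |φ|_{d^β} · ∫ d(x,O)^β dν(x). -/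
/-!
Let `p = card O`, let `c` be the mean of `φ` over `O`, let `K = |φ|_{d^β}`, `D = diam X`, and put
`f = φ - c - (D / lam)^β K d(·, O)^β`. The claim is `∫ f dν ≤ 0`.

Every point `x` has a Birkhoff sum of `f` of length `n ∈ {1, p}` that is nonpositive.
* If `d(x, O) ≥ lam`, take `n = 1`: `φ x - c ≤ K D^β ≤ (D / lam)^β K d(x, O)^β`.
* If `d(x, O) < lam`, take `n = p`: let `y ∈ O` be a nearest point of `x`. The gap hypothesis and
  `2^(-1/α) ≤ 1/2` make `T^i y` a nearest point of `T^i x` for all `i < p`, and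
  `φ (T^i x) - φ (T^i y) ≤ K d(T^i x, T^i y)^β`. As `T^i y` runs once through `O`, summing gives
  the bound.

Cutting an orbit segment of length `N` greedily into such blocks bounds all Birkhoff sums of `f`
by a constant independent of `N` and of the point (`birkhoffSum_le_of_blocks`). By invariance,
`N ∫ f dν` is then bounded in `N`, so `∫ f dν ≤ 0` (`integral_nonpos_of_blocks`).
-/

open MeasureTheory Metric Set

noncomputable section

namespace ErgOpt

variable {X : Type*} [MetricSpace X] [MeasurableSpace X]

/-- The `α`-Hölder seminorm `|φ|_{d^α}`. -/
def hSeminorm (α : ℝ) (φ : X → ℝ) : ℝ :=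
  sSup {r : ℝ | ∃ x y : X, x ≠ y ∧ r = |φ x - φ y| / dist x y ^ α}

/-- Membership in the big Hölder space `Lip(X, d^α)`: finite `α`-Hölder seminorm. -/
def MemLip (α : ℝ) (φ : X → ℝ) : Prop :=
  ∃ C : ℝ, ∀ x y : X, |φ x - φ y| ≤ C * dist x y ^ α

/-- The set `M(X, T)` of `T`-invariant Borel probability measures. -/
def InvMeasures (T : X → X) : Set (Measure X) :=
  {μ : Measure X | IsProbabilityMeasure μ ∧ μ.map T = μ}

/-- `O` is a periodic orbit of `T`: it is the orbit `{x, T x, …, T^[p-1] x}` of a point `x`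
with `T^[p] x = x`, where `p = O.card`. -/
def IsPeriodicOrbit (T : X → X) (O : Finset X) : Prop :=
  ∃ x ∈ O, T^[O.card] x = x ∧ ∀ y : X, y ∈ O ↔ ∃ i < O.card, T^[i] x = y

/-- The measure `μ_O = (1 / card O) ∑_{x ∈ O} δ_x`. -/
def orbitMeasure (O : Finset X) : Measure X :=
  (O.card : ENNReal)⁻¹ • ∑ x ∈ O, Measure.dirac x

end ErgOpt

open ErgOpt

/-- If every point starts a block of length between `1` and `p` with nonpositive Birkhoff sum, then
all Birkhoff sums are at most `p * M`, `M` being an upper bound of `f`: after removing such blocks,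
at most `p` terms remain. -/
theorem birkhoffSum_le_of_blocks {X : Type*} (T : X → X) (f : X → ℝ) (p : ℕ) (M : ℝ)
    (hM0 : 0 ≤ M) (hM : ∀ x, f x ≤ M)
    (h : ∀ x, ∃ n, 1 ≤ n ∧ n ≤ p ∧ birkhoffSum T f n x ≤ 0) (N : ℕ) :
    ∀ x, birkhoffSum T f N x ≤ p * M := by
  induction N using Nat.strong_induction_on with
  | _ N ih =>
    intro x
    by_cases hN : N ≤ p
    · calc birkhoffSum T f N x ≤ ∑ _i ∈ Finset.range N, M :=
            Finset.sum_le_sum fun i _ => hM _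
        _ = N * M := by simp
        _ ≤ p * M := by gcongr
    · obtain ⟨n, h1, hp, hn⟩ := h x
      have e : N = n + (N - n) := by omega
      rw [e, birkhoffSum_add]
      have := ih (N - n) (by omega) (T^[n] x)
      linarith

theorem integral_nonpos_of_blocks {X : Type*} [TopologicalSpace X] [CompactSpace X]
    [MeasurableSpace X] [BorelSpace X] (T : X → X) (hT : Continuous T) (ν : Measure X)
    [IsProbabilityMeasure ν] (hν : ν.map T = ν) (f : X → ℝ) (hf : Continuous f) (p : ℕ)
    (h : ∀ x, ∃ n, 1 ≤ n ∧ n ≤ p ∧ birkhoffSum T f n x ≤ 0) :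
    ∫ x, f x ∂ν ≤ 0 := by
  have hint : ∀ g : X → ℝ, Continuous g → Integrable g ν := fun g hg =>
    hg.integrable_of_hasCompactSupport (HasCompactSupport.of_compactSpace g)
  obtain ⟨M, hM⟩ := (isCompact_range hf).bddAbove
  have hM' : ∀ x, f x ≤ max M 0 := fun x => le_max_of_le_left (hM ⟨x, rfl⟩)
  have hmp : MeasurePreserving T ν ν := ⟨hT.measurable, hν⟩
  have hit : ∀ i, ∫ x, f (T^[i] x) ∂ν = ∫ x, f x ∂ν := by
    intro i
    have hi := hmp.iterate i
    conv_rhs => rw [← hi.map_eq]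
    rw [integral_map hi.measurable.aemeasurable hf.aestronglyMeasurable]
  have hN : ∀ N : ℕ, N * ∫ x, f x ∂ν ≤ p * max M 0 := by
    intro N
    have e : ∫ x, birkhoffSum T f N x ∂ν = N * ∫ x, f x ∂ν := by
      simp only [birkhoffSum]
      rw [integral_finsetSum _ fun i _ =>
        hint (fun x => f (T^[i] x)) (hf.comp (hT.iterate i))]
      simp [hit]
    rw [← e]
    have hc : Continuous (birkhoffSum T f N) := by
      unfold birkhoffSum
      exact continuous_finsetSum _ fun i _ => hf.comp (hT.iterate i)
    calc ∫ x, birkhoffSum T f N x ∂ν ≤ ∫ _x, p * max M 0 ∂ν :=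
          integral_mono (hint _ hc) (integrable_const _) fun x =>
            birkhoffSum_le_of_blocks T f p _ (le_max_right _ _) hM' h N x
      _ = p * max M 0 := by simp
  by_contra! hpos
  obtain ⟨N, hNN⟩ := exists_nat_gt (p * max M 0 / ∫ x, f x ∂ν)
  rw [div_lt_iff₀ hpos] at hNN
  exact absurd (hN N) (not_le.2 hNN)

section Holder

variable {X : Type*} [MetricSpace X] {β : ℝ} {φ : X → ℝ}

theorem hSeminorm_nonneg : 0 ≤ hSeminorm β φ := by
  apply Real.sSup_nonneg
  rintro r ⟨x, y, -, rfl⟩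
  positivity

theorem ErgOpt.MemLip.sub_le (h : MemLip β φ) (hβ : 0 < β) (x y : X) :
    |φ x - φ y| ≤ hSeminorm β φ * dist x y ^ β := by
  rcases eq_or_ne x y with rfl | hxy
  · simp [hβ.ne']
  have hd : 0 < dist x y ^ β := Real.rpow_pos_of_pos (dist_pos.2 hxy) _
  rw [← div_le_iff₀ hd]
  refine le_csSup ?_ ⟨x, y, hxy, rfl⟩
  obtain ⟨C, hC⟩ := h
  refine ⟨C, ?_⟩
  rintro r ⟨a, b, hab, rfl⟩
  rw [div_le_iff₀ (Real.rpow_pos_of_pos (dist_pos.2 hab) _)]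
  exact hC a b

theorem ErgOpt.MemLip.continuous (h : MemLip β φ) (hβ : 0 < β) : Continuous φ := by
  rw [continuous_iff_continuousAt]
  intro y
  rw [ContinuousAt, tendsto_iff_dist_tendsto_zero]
  refine squeeze_zero (fun _ => dist_nonneg) (fun x => h.sub_le hβ x y) ?_
  have hc : Continuous fun x => hSeminorm β φ * dist x y ^ β :=
    continuous_const.mul ((continuous_id.dist continuous_const).rpow_const fun _ => Or.inr hβ.le)
  have := hc.tendsto y
  simpa [hβ.ne'] using this

end Holder

section Orbit

variable {X : Type*} {T : X → X} {O : Finset X}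

theorem ErgOpt.IsPeriodicOrbit.iterate_mem (hO : IsPeriodicOrbit T O) {y : X} (hy : y ∈ O) (i : ℕ) :
    T^[i] y ∈ O := by
  obtain ⟨x, hx, hp, hmem⟩ := hO
  have hcard : 0 < O.card := Finset.card_pos.2 ⟨x, hx⟩
  obtain ⟨j, -, rfl⟩ := (hmem y).1 hy
  have hper : Function.IsPeriodicPt T O.card x := hp
  rw [← Function.iterate_add_apply, ← hper.iterate_mod_apply]
  exact (hmem _).2 ⟨_, Nat.mod_lt _ hcard, rfl⟩

theorem ErgOpt.IsPeriodicOrbit.birkhoffSum_eq (hO : IsPeriodicOrbit T O) (φ : X → ℝ) {y : X}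
    (hy : y ∈ O) : birkhoffSum T φ O.card y = ∑ z ∈ O, φ z := by
  classical
  obtain ⟨x, hx, hp, hmem⟩ := hO
  have himg : O = (Finset.range O.card).image fun i => T^[i] x := by
    ext z
    simp [hmem z]
  have hinj : Set.InjOn (fun i => T^[i] x) (Finset.range O.card : Set ℕ) := by
    rw [← Finset.card_image_iff, ← himg, Finset.card_range]
  have hbase : birkhoffSum T φ O.card x = ∑ z ∈ O, φ z := by
    conv_rhs => rw [himg]
    rw [Finset.sum_image hinj]
    rfl
  -- The full-period Birkhoff sum is constant along the orbit.
  have hshift : ∀ j, birkhoffSum T φ O.card (T^[j] x) = ∑ z ∈ O, φ z := by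
    intro j
    induction j with
    | zero => exact hbase
    | succ j ih =>
      have hper : T^[O.card] (T^[j] x) = T^[j] x := by
        rw [← Function.iterate_add_apply, Nat.add_comm, Function.iterate_add_apply, hp]
      have := birkhoffSum_apply_sub_birkhoffSum T φ O.card (T^[j] x)
      rw [hper, sub_self, ih] at this
      rw [Function.iterate_succ_apply']
      linarith
  obtain ⟨j, -, rfl⟩ := (hmem y).1 hy
  exact hshift j

theorem integral_orbitMeasure [MetricSpace X] [MeasurableSpace X] [BorelSpace X] (O : Finset X)
    (φ : X → ℝ) : ∫ x, φ x ∂(orbitMeasure O) = (O.card : ℝ)⁻¹ * ∑ z ∈ O, φ z := by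
  unfold orbitMeasure
  rw [integral_smul_measure, integral_finsetSum_measure]
  · simp
  · intro i _
    exact integrable_dirac (by simp)

end Orbit

/-- If the distance from `a` to `b ∈ O` is at most half the distance from `b` to any other point of
`O`, then `b` is a nearest point of `O` to `a`. -/
theorem infDist_eq_dist_of_gap {X : Type*} [MetricSpace X] {O : Finset X} {a b : X} (hb : b ∈ O)
    (h : ∀ z ∈ O, b ≠ z → 2 * dist a b ≤ dist b z) : infDist a (O : Set X) = dist a b := by
  refine le_antisymm (infDist_le_dist_of_mem (by exact_mod_cast hb)) ?_
  refine (le_infDist ⟨b, by exact_mod_cast hb⟩).2 fun z hz => ?_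
  rcases eq_or_ne b z with rfl | hne
  · exact le_rfl
  have h1 := h z (by exact_mod_cast hz) hne
  have h2 := dist_triangle b a z
  rw [dist_comm b a] at h2
  linarith

theorem two_rpow_neg_one_div_le {α : ℝ} (hα : α ∈ Set.Ioc (0 : ℝ) 1) :
    (2 : ℝ) ^ (-(1 / α)) ≤ 1 / 2 := by
  have h1 : 1 ≤ 1 / α := by
    rw [le_div_iff₀ hα.1]
    linarith [hα.2]
  calc (2 : ℝ) ^ (-(1 / α)) ≤ 2 ^ (-1 : ℝ) :=
        Real.rpow_le_rpow_of_exponent_le (by norm_num) (by linarith)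
    _ = 1 / 2 := by rw [Real.rpow_neg_one]; norm_num

/-- Let `T : X → X` be continuous on a compact metric space `(X, d)`,
`α ∈ (0,1]`, and `O` a periodic orbit of `T` with `μ_O` the uniform measure on `O`.
Let `lam ∈ (0, diam X)` be such that for all `i < card O` and `x, y` with
`d(x,y) < lam` one has `d(T^[i] x, T^[i] y) < 2^(-1/α) · d(w,z)` for all distinct
`w, z ∈ O` (i.e. `< 2^(-1/α)` times the minimal gap of `O`, the minimum over the
empty set being `+∞`). Then for every `β ∈ [α,1]`, every `ν ∈ M(X,T)` and every
`φ ∈ Lip(X, d^β)`: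
`∫ φ dν - ∫ φ dμ_O ≤ (diam X / lam)^β · |φ|_{d^β} · ∫ d(x, O)^β dν(x)`. -/
theorem wasserstein_type_bound
    {X : Type*} [MetricSpace X] [CompactSpace X] [MeasurableSpace X] [BorelSpace X]
    (T : X → X) (hT : Continuous T) (α : ℝ) (hα : α ∈ Set.Ioc (0 : ℝ) 1)
    (O : Finset X) (hO : IsPeriodicOrbit T O)
    (lam : ℝ) (hlam0 : 0 < lam) (hlam1 : lam < diam (univ : Set X))
    (hlam : ∀ i < O.card, ∀ x y : X, dist x y < lam →
      ∀ w ∈ O, ∀ z ∈ O, w ≠ z →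
        dist (T^[i] x) (T^[i] y) < (2 : ℝ) ^ (-(1 / α)) * dist w z) :
    ∀ β ∈ Set.Icc α 1, ∀ ν ∈ InvMeasures T, ∀ φ : X → ℝ, MemLip β φ →
      (∫ x, φ x ∂ν) - (∫ x, φ x ∂(orbitMeasure O)) ≤
        (diam (univ : Set X) / lam) ^ β * hSeminorm β φ *
          ∫ x, infDist x (O : Set X) ^ β ∂ν := by
  rintro β ⟨hαβ, -⟩ ν ⟨hν, hinv⟩ φ hφ
  have hβ : 0 < β := hα.1.trans_le hαβ
  have hK := hφ.sub_le hβ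
  have hK0 : 0 ≤ hSeminorm β φ := hSeminorm_nonneg
  have hφc := hφ.continuous hβ
  have hne : O.Nonempty := let ⟨x, hx, _⟩ := hO; ⟨x, hx⟩
  have hp : 0 < O.card := hne.card_pos
  have hp' : (0 : ℝ) < O.card := by exact_mod_cast hp
  set K := hSeminorm β φ
  set D := diam (univ : Set X)
  have hD : ∀ x y : X, dist x y ≤ D := fun x y =>
    dist_le_diam_of_mem isCompact_univ.isBounded (mem_univ x) (mem_univ y)
  rw [integral_orbitMeasure]
  set c : ℝ := (O.card : ℝ)⁻¹ * ∑ z ∈ O, φ z with hc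
  have hcsum : ∑ z ∈ O, φ z = O.card * c := by rw [hc]; field_simp
  have hC1 : 1 ≤ (D / lam) ^ β := Real.one_le_rpow ((one_le_div hlam0).2 hlam1.le) hβ.le
  set C := (D / lam) ^ β with hC
  have hgc : Continuous fun x => infDist x (O : Set X) ^ β :=
    (continuous_infDist_pt _).rpow_const fun _ => Or.inr hβ.le
  have hfc : Continuous fun x => φ x - c - C * K * infDist x (O : Set X) ^ β :=
    (hφc.sub continuous_const).sub (continuous_const.mul hgc)
  have key : ∫ x, (φ x - c - C * K * infDist x (O : Set X) ^ β) ∂ν ≤ 0 := by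
    refine integral_nonpos_of_blocks T hT ν hinv _ hfc O.card fun x => ?_
    rcases le_or_gt lam (infDist x (O : Set X)) with hfar | hnear
    · refine ⟨1, le_rfl, hp, ?_⟩
      rw [birkhoffSum_one]
      have h1 : φ x - c ≤ K * D ^ β := by
        have hz : ∀ z ∈ O, φ x - K * D ^ β ≤ φ z := by
          intro z _
          have h1 := (le_abs_self _).trans (hK x z)
          have h2 : K * dist x z ^ β ≤ K * D ^ β := by
            gcongr
            exact hD x z
          linarith
        have h3 := Finset.card_nsmul_le_sum O φ _ hz
        rw [nsmul_eq_mul, hcsum] at h3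
        have := le_of_mul_le_mul_left h3 hp'
        linarith
      have h2 : D ^ β ≤ C * infDist x (O : Set X) ^ β := by
        have hD0 : 0 ≤ D := diam_nonneg
        rw [hC, ← Real.mul_rpow (by positivity) infDist_nonneg]
        refine Real.rpow_le_rpow hD0 ?_ hβ.le
        calc D = D / lam * lam := by field_simp
          _ ≤ _ := by gcongr
      nlinarith [mul_le_mul_of_nonneg_left h2 hK0]
    · refine ⟨O.card, hp, le_rfl, ?_⟩
      obtain ⟨y, hy, hxy⟩ := O.finite_toSet.isCompact.exists_infDist_eq_dist
        (by exact_mod_cast hne) x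
      have hyO : y ∈ O := by exact_mod_cast hy
      rw [hxy] at hnear
      have hterm : ∀ i ∈ Finset.range O.card,
          φ (T^[i] x) - c - C * K * infDist (T^[i] x) (O : Set X) ^ β ≤ φ (T^[i] y) - c := by
        intro i hi
        have hiO := hO.iterate_mem hyO i
        have hnst : infDist (T^[i] x) (O : Set X) = dist (T^[i] x) (T^[i] y) := by
          refine infDist_eq_dist_of_gap hiO fun z hz hzne => ?_
          have h1 := hlam i (Finset.mem_range.1 hi) x y hnear _ hiO z hz hzne
          have h2 := mul_le_mul_of_nonneg_right (two_rpow_neg_one_div_le hα)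
            (dist_nonneg (x := T^[i] y) (y := z))
          linarith
        rw [hnst]
        have h1 := (le_abs_self _).trans (hK (T^[i] x) (T^[i] y))
        have h2 : 0 ≤ K * dist (T^[i] x) (T^[i] y) ^ β := by positivity
        nlinarith [mul_le_mul_of_nonneg_right hC1 h2]
      calc _ ≤ ∑ i ∈ Finset.range O.card, (φ (T^[i] y) - c) := Finset.sum_le_sum hterm
        _ = birkhoffSum T φ O.card y - O.card * c := by simp [birkhoffSum]
        _ ≤ 0 := by rw [hO.birkhoffSum_eq φ hyO, hcsum, sub_self]
  have hint : ∀ g : X → ℝ, Continuous g → Integrable g ν := fun g hg =>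
    hg.integrable_of_hasCompactSupport (HasCompactSupport.of_compactSpace g)
  rw [integral_sub (hint (fun x => φ x - c) (hφc.sub continuous_const))
      (hint (fun x => C * K * infDist x (O : Set X) ^ β) (continuous_const.mul hgc)),
    integral_sub (hint _ hφc) (integrable_const _), integral_const_mul (C * K)] at key
  simp only [integral_const, probReal_univ, smul_eq_mul, one_mul] at key
  linarith
end
end

section
/- Let T : X → X be a continuous map on a compact metric space (X,d). If P(X) ∩ Lip(X,d) is dense in Lip(X,d) with respect to the norm ‖·‖_d, then for each β ∈ (0,1) the set P(X) ∩ lip(X,d^β) is dense in lip(X,d^β) with respect to the norm ‖·‖_{d^β}. -/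
/-!
The Lipschitz functions are dense in the little Hölder space `lip(X, d^β)`, and on a bounded
space the norm `‖·‖_{d^β}` is dominated by a multiple of `‖·‖_d`; the theorem follows by
approximating `φ` first by a Lipschitz `g`, then `g` by a periodically optimized Lipschitz `ψ`.

The density (`exists_lipschitz_approx`) uses the inf-convolution
`g x = inf_y (φ y + n d(x, y))`, which is `n`-Lipschitz. Choose a scale `r` such that `φ` varies
by at most `e t^β` at distances `t ≤ r`, and put `n = e r^(β-1)`. If `r` is small, points `y` with
`d(x, y) > r` cannot lower the infimum below `φ x`, so `0 ≤ φ - g ≤ e r^β`. At distances `t ≥ r`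
the increments of `g - φ` are then at most `e t^β`, while at distances `t < r` those of `φ` and of
`g` are each at most `e t^β`, because `n t ≤ e t^β` there.
-/

open MeasureTheory Metric Set

noncomputable section

namespace ErgOpt

variable {X : Type*} [MetricSpace X] [MeasurableSpace X]

/-- The uniform norm `‖φ‖_∞`. -/
def supNorm (φ : X → ℝ) : ℝ :=
  ⨆ x : X, |φ x|

/-- The `α`-Hölder norm `‖φ‖_{d^α} = |φ|_{d^α} + ‖φ‖_∞`. -/
def hNorm (α : ℝ) (φ : X → ℝ) : ℝ :=
  hSeminorm α φ + supNorm φ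

/-- Membership in the little Hölder space `lip(X, d^α)`. -/
def MemLittleLip (α : ℝ) (φ : X → ℝ) : Prop :=
  MemLip α φ ∧
    ∀ ε : ℝ, 0 < ε → ∃ δ : ℝ, 0 < δ ∧
      ∀ x y : X, 0 < dist x y → dist x y ≤ δ → |φ x - φ y| ≤ ε * dist x y ^ α

/-- `Q(T, ψ) = sup {∫ ψ dμ : μ ∈ M(X, T)}`. -/
def Qmax (T : X → X) (ψ : X → ℝ) : ℝ :=
  sSup ((fun μ : Measure X => ∫ x, ψ x ∂μ) '' InvMeasures T)

/-- `M_max(T, ψ)`, the set of `ψ`-maximizing measures. -/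
def Mmax (T : X → X) (ψ : X → ℝ) : Set (Measure X) :=
  {μ : Measure X | μ ∈ InvMeasures T ∧ ∫ x, ψ x ∂μ = Qmax T ψ}

/-- `P(X)`: continuous potentials having a maximizing measure supported on a
periodic orbit of `T`. -/
def PerOptSet (T : X → X) : Set (X → ℝ) :=
  {φ : X → ℝ | Continuous φ ∧ ∃ μ ∈ Mmax T φ, ∃ O : Finset X,
    IsPeriodicOrbit T O ∧ μ ((O : Set X)ᶜ) = 0}

end ErgOpt

namespace ErgOpt

lemma exists_small_rpow {a K e s : ℝ} (ha : 0 < a) (he : 0 < e) (hs : 0 < s) :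
    ∃ r : ℝ, 0 < r ∧ r ≤ s ∧ K * r ^ a ≤ e := by
  have hc : ContinuousAt (fun r : ℝ => K * r ^ a) 0 :=
    continuousAt_const.mul (Real.continuousAt_rpow_const _ _ (Or.inr ha.le))
  have h0 : (fun r : ℝ => K * r ^ a) 0 < e := by simpa [Real.zero_rpow ha.ne'] using he
  have h1 := hc.eventually_lt continuousAt_const h0
  obtain ⟨t, ht, h⟩ := Metric.eventually_nhds_iff.1 h1
  refine ⟨min s (t / 2), by positivity, min_le_left _ _, (h ?_).le⟩
  rw [Real.dist_eq, sub_zero, abs_of_pos (by positivity)]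
  exact (min_le_right _ _).trans_lt (by linarith)

lemma rpow_split {β t : ℝ} (ht : 0 < t) : t = t ^ (1 - β) * t ^ β := by
  rw [← Real.rpow_add ht]; simp

variable {X : Type*} [MetricSpace X]

lemma hNorm_le {β A B : ℝ} {h : X → ℝ} (hA : 0 ≤ A) (hB : 0 ≤ B)
    (h1 : ∀ x y, x ≠ y → |h x - h y| ≤ A * dist x y ^ β) (h2 : ∀ x, |h x| ≤ B) :
    hNorm β h ≤ A + B := by
  refine add_le_add (Real.sSup_le ?_ hA) (Real.iSup_le h2 hB)
  rintro _ ⟨x, y, hxy, rfl⟩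
  have : 0 < dist x y := dist_pos.2 hxy
  rw [div_le_iff₀ (by positivity)]
  exact h1 x y hxy

lemma MemLip.continuous_one {h : X → ℝ} (hh : MemLip 1 h) : Continuous h := by
  obtain ⟨C, hC⟩ := hh
  refine (LipschitzWith.of_dist_le_mul (K := C.toNNReal) fun x y => ?_).continuous
  have := hC x y
  rw [Real.rpow_one] at this
  rw [Real.dist_eq]
  exact this.trans (mul_le_mul_of_nonneg_right (Real.le_coe_toNNReal C) dist_nonneg)

lemma bounds_of_hNorm_one_lt [CompactSpace X] {h : X → ℝ} {e : ℝ} (hh : MemLip 1 h)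
    (hn : hNorm 1 h < e) :
    (∀ x y, |h x - h y| ≤ e * dist x y) ∧ ∀ x, |h x| ≤ e := by
  have hs0 : 0 ≤ hSeminorm 1 h := by
    apply Real.sSup_nonneg
    rintro _ ⟨x, y, -, rfl⟩
    positivity
  have hu0 : 0 ≤ supNorm h := Real.iSup_nonneg fun x => abs_nonneg _
  unfold hNorm at hn
  constructor
  · intro x y
    rcases eq_or_ne x y with rfl | hxy
    · simp
    have hd : 0 < dist x y := dist_pos.2 hxy
    have hb : BddAbove {r : ℝ | ∃ x y : X, x ≠ y ∧ r = |h x - h y| / dist x y ^ (1 : ℝ)} := by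
      obtain ⟨C, hC⟩ := hh
      refine ⟨C, ?_⟩
      rintro _ ⟨x, y, hxy, rfl⟩
      have : 0 < dist x y := dist_pos.2 hxy
      rw [div_le_iff₀ (by positivity)]
      exact hC x y
    have h1 : |h x - h y| / dist x y ^ (1 : ℝ) ≤ hSeminorm 1 h := le_csSup hb ⟨x, y, hxy, rfl⟩
    rw [Real.rpow_one, div_le_iff₀ hd] at h1
    exact h1.trans (mul_le_mul_of_nonneg_right (by linarith) hd.le)
  · intro x
    have hb : BddAbove (range fun x => |h x|) :=
      (isCompact_range hh.continuous_one.abs).bddAbove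
    have h1 : |h x| ≤ supNorm h := le_ciSup hb x
    linarith

lemma MemLip.memLittleLip [CompactSpace X] {β : ℝ} (hβ : β ∈ Ioo (0 : ℝ) 1) {h : X → ℝ}
    (hh : MemLip 1 h) : MemLittleLip β h := by
  obtain ⟨C, hC⟩ := hh
  have ha : 0 < 1 - β := by linarith [hβ.2]
  have key : ∀ s x y, 0 < dist x y → dist x y ≤ s →
      |h x - h y| ≤ |C| * s ^ (1 - β) * dist x y ^ β := by
    intro s x y h0 hs
    have h1 := hC x y
    rw [Real.rpow_one] at h1
    calc |h x - h y| ≤ |C| * dist x y :=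
          h1.trans (mul_le_mul_of_nonneg_right (le_abs_self C) h0.le)
      _ = |C| * (dist x y ^ (1 - β) * dist x y ^ β) := by rw [← rpow_split h0]
      _ ≤ |C| * (s ^ (1 - β) * dist x y ^ β) := by gcongr
      _ = _ := by ring
  refine ⟨⟨|C| * diam (univ : Set X) ^ (1 - β), fun x y => ?_⟩, fun e he => ?_⟩
  · rcases eq_or_ne x y with rfl | hxy
    · simp [Real.zero_rpow hβ.1.ne']
    · exact key _ x y (dist_pos.2 hxy)
        (dist_le_diam_of_mem isCompact_univ.isBounded (mem_univ _) (mem_univ _))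
  · obtain ⟨r, hr, -, hK⟩ := exists_small_rpow (K := |C|) ha he one_pos
    exact ⟨r, hr, fun x y h0 hs => (key r x y h0 hs).trans (by gcongr)⟩

/-- Lipschitz functions are dense in the little Hölder space, with explicit control of the
seminorm and of the uniform norm of the difference. -/
lemma exists_lipschitz_approx {β : ℝ} (hβ : β ∈ Ioo (0 : ℝ) 1) {φ : X → ℝ}
    (hφ : MemLittleLip β φ) {e : ℝ} (he : 0 < e) :
    ∃ g : X → ℝ, MemLip 1 g ∧
      (∀ x y, x ≠ y → |(g x - φ x) - (g y - φ y)| ≤ 2 * e * dist x y ^ β) ∧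
      ∀ x, |g x - φ x| ≤ e := by
  obtain ⟨⟨C, hC⟩, hlit⟩ := hφ
  obtain ⟨δ, hδ, hφδ⟩ := hlit e he
  have ha : 0 < 1 - β := by linarith [hβ.2]
  obtain ⟨r, hr, hrs, hK⟩ := exists_small_rpow (K := |C|) (e := e * δ ^ (1 - β))
    (s := min δ 1) ha (by positivity) (by positivity)
  have hrδ : r ≤ δ := hrs.trans (min_le_left _ _)
  have hr1 : r ≤ 1 := hrs.trans (min_le_right _ _)
  set n : ℝ := e / r ^ (1 - β) with hn
  have hra : 0 < r ^ (1 - β) := by positivity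
  have hnr : n * r ^ (1 - β) = e := by rw [hn]; field_simp
  have hn0 : 0 < n := by positivity
  have hCn : |C| ≤ n * δ ^ (1 - β) := by
    rw [hn, div_mul_eq_mul_div, le_div_iff₀ hra]
    exact hK
  have hrβ : r ^ β ≤ 1 := Real.rpow_le_one hr.le hr1 hβ.1.le
  -- no competitor `y` in the infimum beats `y = x` by more than `e r^β`
  have low : ∀ x y, φ x - e * r ^ β ≤ φ y + n * dist x y := by
    intro x y
    have hpos : 0 ≤ e * r ^ β := by positivity
    rcases eq_or_ne x y with rfl | hxy
    · simpa using hpos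
    have hd : 0 < dist x y := dist_pos.2 hxy
    have hβd : 0 < dist x y ^ β := by positivity
    have hsplit : n * dist x y = n * dist x y ^ (1 - β) * dist x y ^ β := by
      rw [mul_assoc, ← rpow_split hd]
    have hnd : 0 ≤ n * dist x y := by positivity
    rcases le_total (dist x y) r with h | h
    · have h1 := le_of_abs_le (hφδ x y hd (h.trans hrδ))
      have h2 : e * dist x y ^ β ≤ e * r ^ β := by
        have := hβ.1.le
        gcongr
      linarith
    · rcases le_total (dist x y) δ with h' | h'
      · have h1 := le_of_abs_le (hφδ x y hd h')
        have h2 : e * dist x y ^ β ≤ n * dist x y := by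
          rw [hsplit, ← hnr]; gcongr
        linarith
      · have h1 := le_of_abs_le (hC x y)
        have h2 : C * dist x y ^ β ≤ n * dist x y := by
          rw [hsplit]
          refine mul_le_mul_of_nonneg_right ?_ hβd.le
          exact (le_abs_self C).trans (hCn.trans (by gcongr))
        linarith
  let g : X → ℝ := fun x => ⨅ y, φ y + n * dist x y
  have hbdd : ∀ x, BddBelow (range fun y => φ y + n * dist x y) := by
    intro x
    refine ⟨φ x - e * r ^ β, ?_⟩
    rintro _ ⟨y, rfl⟩
    exact low x y
  have hgle : ∀ x, g x ≤ φ x := fun x => by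
    simpa using ciInf_le (hbdd x) x
  have hgge : ∀ x, φ x - e * r ^ β ≤ g x := fun x => by
    have : Nonempty X := ⟨x⟩
    exact le_ciInf (low x)
  have hg1 : ∀ x y, g x - g y ≤ n * dist x y := by
    intro x y
    have : Nonempty X := ⟨x⟩
    have : g x - n * dist x y ≤ g y := by
      refine le_ciInf fun z => ?_
      have h1 : g x ≤ φ z + n * dist x z := ciInf_le (hbdd x) z
      have h2 : n * dist x z ≤ n * (dist x y + dist y z) := by
        gcongr; exact dist_triangle _ _ _
      linarith
    linarith
  have hg : ∀ x y, |g x - g y| ≤ n * dist x y := fun x y =>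
    abs_le.2 ⟨by have := hg1 y x; rw [dist_comm] at this; linarith, hg1 x y⟩
  refine ⟨g, ⟨n, fun x y => by simpa using hg x y⟩, fun x y hxy => ?_, fun x => ?_⟩
  · have hd : 0 < dist x y := dist_pos.2 hxy
    rcases le_total (dist x y) r with h | h
    · have h1 := hφδ x y hd (h.trans hrδ)
      have h2 : n * dist x y ≤ e * dist x y ^ β := by
        calc n * dist x y = n * dist x y ^ (1 - β) * dist x y ^ β := by
              rw [mul_assoc, ← rpow_split hd]
          _ ≤ n * r ^ (1 - β) * dist x y ^ β := by gcongr
          _ = _ := by rw [hnr]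
      have h3 := hg x y
      rw [abs_le] at *
      constructor <;> linarith
    · have h2 : e * r ^ β ≤ e * dist x y ^ β := by
        have := hβ.1.le
        gcongr
      have h3 : 0 ≤ e * r ^ β := by positivity
      have := hgle x
      have := hgle y
      have := hgge x
      have := hgge y
      rw [abs_le]
      constructor <;> linarith
  · have h2 : e * r ^ β ≤ e := by nlinarith
    have := hgle x
    have := hgge x
    rw [abs_le]
    constructor <;> linarith

end ErgOpt

open ErgOpt

/-- Let `T : X → X` be continuous on a compact metric space `(X, d)`.
If `P(X) ∩ Lip(X, d)` is dense in `Lip(X, d)` for `‖·‖_d`, then for each `β ∈ (0, 1)`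
the set `P(X) ∩ lip(X, d^β)` is dense in `lip(X, d^β)` for `‖·‖_{d^β}`. -/
theorem perOpt_dense_in_littleLip
    {X : Type*} [MetricSpace X] [CompactSpace X] [MeasurableSpace X] [BorelSpace X]
    (T : X → X) (hT : Continuous T)
    (hdense : ∀ φ : X → ℝ, MemLip 1 φ → ∀ ε : ℝ, 0 < ε →
      ∃ ψ : X → ℝ, ψ ∈ PerOptSet T ∧ MemLip 1 ψ ∧
        hNorm 1 (fun x => ψ x - φ x) < ε) :
    ∀ β ∈ Set.Ioo (0 : ℝ) 1, ∀ φ : X → ℝ, MemLittleLip β φ → ∀ ε : ℝ, 0 < ε →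
      ∃ ψ : X → ℝ, ψ ∈ PerOptSet T ∧ MemLittleLip β ψ ∧
        hNorm β (fun x => ψ x - φ x) < ε := by
  intro β hβ φ hφ ε hε
  obtain ⟨g, hgL, hg1, hg2⟩ := exists_lipschitz_approx hβ hφ (e := ε / 8) (by positivity)
  have ha : 0 < 1 - β := by linarith [hβ.2]
  -- `D` dominates both the diameter and `1`, so that `t ≤ D t^β` for every distance `t`
  set D : ℝ := diam (univ : Set X) + 1 with hD
  have hD1 : 1 ≤ D := by
    have : 0 ≤ diam (univ : Set X) := diam_nonneg
    linarith
  have hD0 : 0 < D := by linarith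
  obtain ⟨ψ, hψP, hψL, hψ⟩ := hdense g hgL (ε / (8 * D)) (by positivity)
  have hL : MemLip 1 (fun x => ψ x - g x) := by
    obtain ⟨A, hA⟩ := hψL
    obtain ⟨B, hB⟩ := hgL
    refine ⟨A + B, fun x y => ?_⟩
    have h1 := hA x y
    have h2 := hB x y
    rw [add_mul]
    rw [abs_le] at *
    constructor <;> linarith
  obtain ⟨hs, hu⟩ := bounds_of_hNorm_one_lt hL hψ
  have hed : ε / (8 * D) * D = ε / 8 := by field_simp
  have hle : ε / (8 * D) ≤ ε / 8 := by
    rw [← hed]; exact le_mul_of_one_le_right (by positivity) hD1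
  refine ⟨ψ, hψP, hψL.memLittleLip hβ, ?_⟩
  refine (hNorm_le (A := 3 * (ε / 8)) (B := 2 * (ε / 8)) (by positivity) (by positivity)
    (fun x y hxy => ?_) fun x => ?_).trans_lt (by linarith)
  · have hd : 0 < dist x y := dist_pos.2 hxy
    have hdD : dist x y ≤ D :=
      (dist_le_diam_of_mem isCompact_univ.isBounded (mem_univ x) (mem_univ y)).trans (by linarith)
    have h1 : dist x y ^ (1 - β) ≤ D :=
      (Real.rpow_le_rpow hd.le hdD ha.le).trans
        (Real.rpow_le_self_of_one_le hD1 (by linarith [hβ.1]))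
    have h2 : ε / (8 * D) * dist x y ≤ ε / 8 * dist x y ^ β := by
      calc ε / (8 * D) * dist x y = ε / (8 * D) * (dist x y ^ (1 - β) * dist x y ^ β) := by
            rw [← rpow_split hd]
        _ ≤ ε / (8 * D) * (D * dist x y ^ β) := by gcongr
        _ = _ := by rw [← mul_assoc, hed]
    have h3 := hs x y
    have h4 := hg1 x y hxy
    rw [abs_le] at *
    constructor <;> linarith
  · have h3 := hu x
    have h4 := hg2 x
    rw [abs_le] at *
    constructor <;> linarith
end
end

section
/- Let (X,d) be a compact metric space, let 0 < α < β < 1, let δ, ε ∈ (0, 1/5), and let ψ ∈ Lip(X,d^α) satisfy ‖ψ‖_{d^α} ≤ ε. Then there exists a function ψ_β ∈ Lip(X,d^β) such that ‖ψ_β‖_{d^β} ≤ 3(ε + ε δ^{α−β}) and ‖ψ − ψ_β‖_∞ ≤ 35 ε δ^α. -/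
/-!
The approximant is the inf-convolution `ψβ x = inf_y (ψ y + L * d(x, y) ^ β)` with
`L = ε * δ ^ (α - β)`. Since `d ^ β` is a metric for `β ≤ 1`, `ψβ` is `L`-Hölder of exponent `β`
(`infConv_le_add`), and it satisfies `inf ψ ≤ ψβ ≤ ψ`, so its uniform norm is at most `ε`. For the
approximation, `ψ x - ψ y - L * d(x, y) ^ β ≤ ε * t ^ α - L * t ^ β` with `t = d(x, y)`; the choice
of `L` makes this nonpositive for `t ≥ δ`, and it is at most `ε * δ ^ α` for `t ≤ δ`
(`rpow_tradeoff`). This gives `0 ≤ ψ - ψβ ≤ ε * δ ^ α`.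
-/

open Metric Set

noncomputable section

open ErgOpt

namespace ErgOpt

/-- The inf-convolution of `ψ` with `L * d ^ β`. It is a genuine infimum when `ψ` is bounded below
and `0 ≤ L`. -/
def infConv {X : Type*} [MetricSpace X] (L β : ℝ) (ψ : X → ℝ) (x : X) : ℝ :=
  ⨅ y : X, (ψ y + L * dist x y ^ β)

lemma bddBelow_infConv {X : Type*} [MetricSpace X] {L β ε : ℝ} {ψ : X → ℝ} (hL : 0 ≤ L)
    (hψ : ∀ x, |ψ x| ≤ ε) (x : X) :
    BddBelow (range fun y : X => ψ y + L * dist x y ^ β) := by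
  refine ⟨-ε, ?_⟩
  rintro _ ⟨y, rfl⟩
  have h1 := (abs_le.1 (hψ y)).1
  have h2 : 0 ≤ L * dist x y ^ β := by positivity
  simp only
  linarith

lemma infConv_le {X : Type*} [MetricSpace X] {L β ε : ℝ} {ψ : X → ℝ} (hL : 0 ≤ L) (hβ : 0 < β)
    (hψ : ∀ x, |ψ x| ≤ ε) (x : X) : infConv L β ψ x ≤ ψ x := by
  have h := ciInf_le (bddBelow_infConv (β := β) hL hψ x) x
  simpa [infConv, Real.zero_rpow hβ.ne'] using h

lemma neg_le_infConv {X : Type*} [MetricSpace X] {L β ε : ℝ} {ψ : X → ℝ} (hL : 0 ≤ L)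
    (hψ : ∀ x, |ψ x| ≤ ε) (x : X) : -ε ≤ infConv L β ψ x := by
  have : Nonempty X := ⟨x⟩
  refine le_ciInf fun y => ?_
  have h1 := (abs_le.1 (hψ y)).1
  have h2 : 0 ≤ L * dist x y ^ β := by positivity
  linarith

/-- Half of the Hölder bound for `infConv`; it rests on the triangle inequality for `d ^ β`. -/
lemma infConv_le_add {X : Type*} [MetricSpace X] {L β ε : ℝ} {ψ : X → ℝ} (hL : 0 ≤ L)
    (hβ : 0 < β) (hβ1 : β < 1) (hψ : ∀ x, |ψ x| ≤ ε) (x z : X) :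
    infConv L β ψ x ≤ infConv L β ψ z + L * dist x z ^ β := by
  have : Nonempty X := ⟨x⟩
  rw [← sub_le_iff_le_add]
  refine le_ciInf fun y => ?_
  have h := ciInf_le (bddBelow_infConv (β := β) hL hψ x) y
  have ht : dist x y ^ β ≤ dist x z ^ β + dist z y ^ β :=
    (Real.rpow_le_rpow dist_nonneg (dist_triangle x z y) hβ.le).trans
      (Real.rpow_add_le_add_rpow dist_nonneg dist_nonneg hβ.le hβ1.le)
  have := mul_le_mul_of_nonneg_left ht hL
  simp only [infConv] at *
  linarith

lemma abs_infConv_sub_le {X : Type*} [MetricSpace X] {L β ε : ℝ} {ψ : X → ℝ} (hL : 0 ≤ L)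
    (hβ : 0 < β) (hβ1 : β < 1) (hψ : ∀ x, |ψ x| ≤ ε) (x z : X) :
    |infConv L β ψ x - infConv L β ψ z| ≤ L * dist x z ^ β := by
  have h1 := infConv_le_add hL hβ hβ1 hψ x z
  have h2 := infConv_le_add hL hβ hβ1 hψ z x
  rw [dist_comm z x] at h2
  rw [abs_le]
  constructor <;> linarith

lemma rpow_tradeoff {α β δ t : ℝ} (h0α : 0 < α) (hαβ : α < β) (hδ : 0 < δ) (ht : 0 ≤ t) :
    t ^ α ≤ δ ^ (α - β) * t ^ β + δ ^ α := by
  rcases le_total t δ with h | h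
  · have h1 := Real.rpow_le_rpow ht h h0α.le
    have h2 : 0 ≤ δ ^ (α - β) * t ^ β := by positivity
    linarith
  · have htp : 0 < t := hδ.trans_le h
    have h1 : t ^ (α - β) ≤ δ ^ (α - β) :=
      Real.rpow_le_rpow_of_nonpos hδ h (by linarith)
    have h2 : t ^ α = t ^ (α - β) * t ^ β := by
      rw [← Real.rpow_add htp]; congr 1; ring
    have h3 : 0 ≤ δ ^ α := by positivity
    have h4 := mul_le_mul_of_nonneg_right h1 (Real.rpow_nonneg ht β)
    linarith

/-- For `MemLip` functions on a compact space the suprema defining `hNorm` are over bounded sets,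
so a bound on `hNorm` yields pointwise bounds. -/
lemma bounds_of_hNorm_le {X : Type*} [MetricSpace X] [CompactSpace X] {α ε : ℝ} (h0α : 0 < α)
    {ψ : X → ℝ} (hL : MemLip α ψ) (hn : hNorm α ψ ≤ ε) :
    (∀ x, |ψ x| ≤ ε) ∧ ∀ x y, |ψ x - ψ y| ≤ ε * dist x y ^ α := by
  obtain ⟨C, hC⟩ := hL
  have hs0 : 0 ≤ supNorm ψ := Real.iSup_nonneg fun x => abs_nonneg _
  have hh0 : 0 ≤ hSeminorm α ψ := by
    refine Real.sSup_nonneg ?_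
    rintro r ⟨x, y, -, rfl⟩
    positivity
  unfold hNorm at hn
  refine ⟨fun x => ?_, fun x y => ?_⟩
  · have hb : BddAbove (range fun y : X => |ψ y|) := by
      refine ⟨|ψ x| + |C| * diam (univ : Set X) ^ α, ?_⟩
      rintro _ ⟨y, rfl⟩
      have h1 : dist y x ≤ diam (univ : Set X) :=
        dist_le_diam_of_mem isCompact_univ.isBounded (mem_univ _) (mem_univ _)
      have h2 := Real.rpow_le_rpow dist_nonneg h1 h0α.le
      have h3 : C * dist y x ^ α ≤ |C| * diam (univ : Set X) ^ α :=
        mul_le_mul (le_abs_self C) h2 (by positivity) (abs_nonneg C)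
      have h4 := hC y x
      have h5 := abs_sub_abs_le_abs_sub (ψ y) (ψ x)
      simp only
      linarith
    have : |ψ x| ≤ supNorm ψ := le_ciSup hb x
    linarith
  · rcases eq_or_ne x y with rfl | hxy
    · simp [Real.zero_rpow h0α.ne']
    have hd : 0 < dist x y ^ α := Real.rpow_pos_of_pos (dist_pos.2 hxy) α
    have hb : BddAbove {r : ℝ | ∃ x y : X, x ≠ y ∧ r = |ψ x - ψ y| / dist x y ^ α} := by
      refine ⟨C, ?_⟩
      rintro r ⟨u, v, huv, rfl⟩
      rw [div_le_iff₀ (Real.rpow_pos_of_pos (dist_pos.2 huv) α)]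
      exact hC u v
    have : |ψ x - ψ y| / dist x y ^ α ≤ hSeminorm α ψ := le_csSup hb ⟨x, y, hxy, rfl⟩
    rw [← div_le_iff₀ hd]
    linarith

end ErgOpt

/-- Let `(X, d)` be a compact metric space, `0 < α < β < 1`,
`δ, ε ∈ (0, 1/5)`, and `ψ ∈ Lip(X, d^α)` with `‖ψ‖_{d^α} ≤ ε`. Then there exists
`ψβ ∈ Lip(X, d^β)` with `‖ψβ‖_{d^β} ≤ 3(ε + ε δ^{α-β})` and
`‖ψ - ψβ‖_∞ ≤ 35 ε δ^α` (i.e. `|ψ x - ψβ x| ≤ 35 ε δ^α` for every `x`). -/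
theorem holder_splitting
    {X : Type*} [MetricSpace X] [CompactSpace X]
    (α β : ℝ) (h0α : 0 < α) (hαβ : α < β) (hβ1 : β < 1)
    (δ ε : ℝ) (hδ : δ ∈ Set.Ioo (0 : ℝ) (1 / 5)) (hε : ε ∈ Set.Ioo (0 : ℝ) (1 / 5))
    (ψ : X → ℝ) (hψLip : MemLip α ψ) (hψnorm : hNorm α ψ ≤ ε) :
    ∃ ψβ : X → ℝ, MemLip β ψβ ∧
      hNorm β ψβ ≤ 3 * (ε + ε * δ ^ (α - β)) ∧
      ∀ x : X, |ψ x - ψβ x| ≤ 35 * ε * δ ^ α := by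
  have hδ0 : 0 < δ := hδ.1
  have hε0 : 0 < ε := hε.1
  have hβ0 : 0 < β := h0α.trans hαβ
  obtain ⟨hsup, hhol⟩ := bounds_of_hNorm_le h0α hψLip hψnorm
  have hL : 0 ≤ ε * δ ^ (α - β) := by positivity
  have hlip := abs_infConv_sub_le hL hβ0 hβ1 hsup
  refine ⟨infConv (ε * δ ^ (α - β)) β ψ, ⟨_, hlip⟩, ?_, fun x => ?_⟩
  · have h1 : hSeminorm β (infConv (ε * δ ^ (α - β)) β ψ) ≤ ε * δ ^ (α - β) := by
      refine Real.sSup_le ?_ hL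
      rintro r ⟨u, v, huv, rfl⟩
      rw [div_le_iff₀ (Real.rpow_pos_of_pos (dist_pos.2 huv) β)]
      exact hlip u v
    have h2 : supNorm (infConv (ε * δ ^ (α - β)) β ψ) ≤ ε := by
      refine Real.iSup_le (fun x => abs_le.2 ⟨neg_le_infConv hL hsup x, ?_⟩) hε0.le
      exact (infConv_le hL hβ0 hsup x).trans (abs_le.1 (hsup x)).2
    unfold hNorm
    linarith
  · have : Nonempty X := ⟨x⟩
    have h1 := infConv_le hL hβ0 hsup x
    have h2 : ψ x - ε * δ ^ α ≤ infConv (ε * δ ^ (α - β)) β ψ x := by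
      refine le_ciInf fun y => ?_
      have h3 := (abs_le.1 (hhol x y)).2
      have h4 := mul_le_mul_of_nonneg_left
        (rpow_tradeoff h0α hαβ hδ0 (dist_nonneg (x := x) (y := y))) hε0.le
      linarith
    have h5 : 0 < ε * δ ^ α := by positivity
    rw [abs_of_nonneg (by linarith)]
    linarith
end
end
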